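/- arXiv:2105.12986 — 6 statements merged into one kernel-verified Lean document; each statement's English description precedes it below -/
import Mathlib

section
/- A coherent set of gambles D on Ω is maximal (i.e., no coherent set of gambles properly contains D) if and only if for every gamble f ∈ L(Ω) with f ≠ 0, f ∉ D implies −f ∈ D. -/
open Set

universe u

/-- The set of gambles on `Ω`: bounded real-valued functions. -/
def Gmb (Ω : Type u) : Set (Ω → ℝ) := {f | ∃ B : ℝ, ∀ ω, |f ω| ≤ B}

/-- `L⁺(Ω)`: non-negative, non-vanishing gambles. -/
def GmbPos (Ω : Type u) : Set (Ω → ℝ) :=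
  {f | f ∈ Gmb Ω ∧ (∀ ω, 0 ≤ f ω) ∧ f ≠ 0}

/-- Coherent set of gambles. -/
def Coherent {Ω : Type u} (D : Set (Ω → ℝ)) : Prop :=
  D ⊆ Gmb Ω ∧ GmbPos Ω ⊆ D ∧ (0 : Ω → ℝ) ∉ D ∧
    (∀ f ∈ D, ∀ g ∈ D, f + g ∈ D) ∧
    (∀ f ∈ D, ∀ c : ℝ, 0 < c → c • f ∈ D)

/-- Maximal coherent set of gambles: no coherent set properly contains it. -/
def MaxCoh {Ω : Type u} (M : Set (Ω → ℝ)) : Prop :=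
  Coherent M ∧ ∀ D : Set (Ω → ℝ), Coherent D → M ⊆ D → D = M

/-- Membership in `Φ(Ω)`: coherent sets together with `L(Ω)`. -/
def PhiMem {Ω : Type u} (D : Set (Ω → ℝ)) : Prop :=
  Coherent D ∨ D = Gmb Ω

/-- The closure operator `C` on sets of gambles. -/
def Cl {Ω : Type u} (A : Set (Ω → ℝ)) : Set (Ω → ℝ) :=
  ⋂₀ {D | PhiMem D ∧ A ⊆ D}

/-- Order on partitions (as equivalence relations): `ple x y` iff `𝒫x ≤ 𝒫y`,
i.e. `y` refines `x`. -/
def ple {Ω : Type u} (x y : Setoid Ω) : Prop := ∀ a b : Ω, y.r a b → x.r a b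

/-- Join of two partitions: the relation is the conjunction. -/
def pjoin {Ω : Type u} (x y : Setoid Ω) : Setoid Ω :=
  ⟨fun a b => x.r a b ∧ y.r a b,
    ⟨fun a => ⟨x.iseqv.refl a, y.iseqv.refl a⟩,
     fun h => ⟨x.iseqv.symm h.1, y.iseqv.symm h.2⟩,
     fun h h' => ⟨x.iseqv.trans h.1 h'.1, y.iseqv.trans h.2 h'.2⟩⟩⟩

/-- Conditional independence of partitions: blocks are equivalence classes,
`B1 ∩ B ≠ ∅` and `B2 ∩ B ≠ ∅` imply `B1 ∩ B2 ∩ B ≠ ∅`. -/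
def CondIndep {Ω : Type u} (p1 p2 p : Setoid Ω) : Prop :=
  ∀ a b c : Ω, (∃ u, p1.r a u ∧ p.r c u) → (∃ v, p2.r b v ∧ p.r c v) →
    ∃ w, p1.r a w ∧ p2.r b w ∧ p.r c w

/-- Saturation operator of a partition. -/
def sat {Ω : Type u} (x : Setoid Ω) (S : Set Ω) : Set Ω :=
  {ω | ∃ ω' ∈ S, x.r ω ω'}

/-- `L_x`: the `x`-measurable gambles. -/
def Meas {Ω : Type u} (x : Setoid Ω) : Set (Ω → ℝ) :=
  {f | f ∈ Gmb Ω ∧ ∀ a b : Ω, x.r a b → f a = f b}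

/-- Extraction operator `ε_x`. -/
def eps {Ω : Type u} (x : Setoid Ω) (D : Set (Ω → ℝ)) : Set (Ω → ℝ) :=
  Cl (D ∩ Meas x)

/-- `At(D)`: maximal coherent sets dominating `D`. -/
def Atoms {Ω : Type u} (D : Set (Ω → ℝ)) : Set (Set (Ω → ℝ)) :=
  {M | MaxCoh M ∧ D ⊆ M}

/-- `D_S`: the coherent set of gambles associated to a set `S ⊆ Ω`. -/
def DS {Ω : Type u} (S : Set Ω) : Set (Ω → ℝ) :=
  {f | f ∈ Gmb Ω ∧ 0 < sInf (f '' S)} ∪ GmbPos Ω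

/-- `posi(K)`: positive linear hull. -/
def posi {Ω : Type u} (K : Set (Ω → ℝ)) : Set (Ω → ℝ) :=
  {g | ∃ r : ℕ, 1 ≤ r ∧ ∃ (lam : Fin r → ℝ) (f : Fin r → (Ω → ℝ)),
    (∀ j, 0 < lam j) ∧ (∀ j, f j ∈ K) ∧ g = ∑ j, lam j • f j}
theorem stmt0 {Ω : Type u} [Nonempty Ω] (D : Set (Ω → ℝ)) (hD : Coherent D) :
    (∀ D' : Set (Ω → ℝ), Coherent D' → D ⊆ D' → D' = D) ↔
      ∀ f ∈ Gmb Ω, f ≠ 0 → f ∉ D → -f ∈ D := by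
  obtain ⟨hB, hP, h0, hA, hS⟩ := hD
  constructor
  · intro hM f hf hf0 hfD
    by_contra hn
    have key := hM {h | ∃ d : Ω → ℝ, ∃ c : ℝ, 0 ≤ c ∧ (d ∈ D ∨ (d = 0 ∧ 0 < c)) ∧ h = d + c • f}
      ?_ ?_
    · apply hfD
      rw [← key]
      exact ⟨0, 1, zero_le_one, Or.inr ⟨rfl, one_pos⟩, by simp⟩
    · refine ⟨?_, ?_, ?_, ?_, ?_⟩
      · rintro h ⟨d, c, hc, hd, rfl⟩
        have hd' : d ∈ Gmb Ω := by
          rcases hd with hd | ⟨rfl, -⟩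
          · exact hB hd
          · exact ⟨0, by simp⟩
        obtain ⟨B1, h1⟩ := hd'
        obtain ⟨B2, h2⟩ := hf
        refine ⟨B1 + c * B2, fun ω => ?_⟩
        simp only [Pi.add_apply, Pi.smul_apply, smul_eq_mul]
        refine (abs_add_le _ _).trans (add_le_add (h1 ω) ?_)
        rw [abs_mul, abs_of_nonneg hc]
        exact mul_le_mul_of_nonneg_left (h2 ω) hc
      · intro h hh
        exact ⟨h, 0, le_rfl, Or.inl (hP hh), by simp⟩
      · rintro ⟨d, c, hc, hd, h⟩
        rcases hd with hd | ⟨rfl, hc'⟩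
        · rcases hc.eq_or_lt with rfl | hc'
          · apply h0
            have : d = 0 := by simpa using h.symm
            rwa [this] at hd
          · apply hn
            have : -f = c⁻¹ • d := by
              have : d = c • (-f) := by
                rw [smul_neg]; exact eq_neg_of_add_eq_zero_left h.symm
              rw [this, smul_smul, inv_mul_cancel₀ hc'.ne', one_smul]
            rw [this]
            exact hS d hd _ (inv_pos.2 hc')
        · rw [zero_add] at h
          rcases smul_eq_zero.1 h.symm with h | h
          · exact hc'.ne' h
          · exact hf0 h
      · rintro _ ⟨d, c, hc, hd, rfl⟩ _ ⟨e, c', hc', he, rfl⟩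
        refine ⟨d + e, c + c', add_nonneg hc hc', ?_, ?_⟩
        · rcases hd with hd | ⟨rfl, hd⟩ <;> rcases he with he | ⟨rfl, he⟩
          · exact Or.inl (hA _ hd _ he)
          · left; simpa using hd
          · left; simpa using he
          · right; exact ⟨by simp, by positivity⟩
        · rw [add_smul]; abel
      · rintro _ ⟨d, c, hc, hd, rfl⟩ k hk
        refine ⟨k • d, k * c, by positivity, ?_, by rw [smul_add, smul_smul]⟩
        rcases hd with hd | ⟨rfl, hd⟩
        · exact Or.inl (hS _ hd _ hk)
        · right; exact ⟨by simp, by positivity⟩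
    · intro h hh
      exact ⟨h, 0, le_rfl, Or.inl hh, by simp⟩
  · rintro h D' ⟨hB', -, h0', hA', -⟩ hsub
    refine Subset.antisymm (fun f hf => ?_) hsub
    by_contra hfD
    have hne : f ≠ 0 := by rintro rfl; exact h0' hf
    have := hA' _ hf _ (hsub (h f (hB' hf) hne hfD))
    rw [add_neg_cancel] at this
    exact h0' this
end

section
/- Let M and M' be maximal coherent sets of gambles on Ω and let 𝒫x be a partition of Ω. Then ε_x(M) = ε_x(M') if and only if ε_x(M) ⊆ M' (that is, M' ∈ At(ε_x(M)); in particular two maximal sets containing a common local atom ε_x(M'') have the same extraction under ε_x). -/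
open Set

universe u

theorem maxcoh_neg_mem {Ω : Type u} {M : Set (Ω → ℝ)} (hM : MaxCoh M) {f : Ω → ℝ}
    (hf : f ∈ Gmb Ω) (hf0 : f ≠ 0) (hfM : f ∉ M) : -f ∈ M := by
  obtain ⟨⟨hG, hP, h0, hadd, hsm⟩, hmax⟩ := hM
  by_contra hneg
  apply hfM
  have hcoh : Coherent {g : Ω → ℝ | ∃ c : ℝ, (0 ≤ c ∧ ∃ m ∈ M, g = m + c • f) ∨
      (0 < c ∧ g = c • f)} := by
    refine ⟨?_, ?_, ?_, ?_, ?_⟩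
    · have hs : ∀ c : ℝ, c • f ∈ Gmb Ω := by
        intro c
        obtain ⟨B, hB⟩ := hf
        refine ⟨|c| * B, fun ω => ?_⟩
        simp only [Pi.smul_apply, smul_eq_mul, abs_mul]
        exact mul_le_mul_of_nonneg_left (hB ω) (abs_nonneg c)
      rintro g ⟨c, ⟨hc, m, hm, rfl⟩ | ⟨hc, rfl⟩⟩
      · obtain ⟨B, hB⟩ := hG hm
        obtain ⟨B', hB'⟩ := hs c
        exact ⟨B + B', fun ω => (abs_add_le _ _).trans (add_le_add (hB ω) (hB' ω))⟩
      · exact hs c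
    · intro g hg
      exact ⟨0, Or.inl ⟨le_rfl, g, hP hg, by simp⟩⟩
    · rintro ⟨c, ⟨hc, m, hm, h⟩ | ⟨hc, h⟩⟩
      · rcases hc.eq_or_lt with rfl | hc
        · apply h0
          have : m = 0 := by simpa using h.symm
          rwa [this] at hm
        · apply hneg
          have h1 : m = -(c • f) := eq_neg_of_add_eq_zero_left h.symm
          have h2 := hsm m hm c⁻¹ (inv_pos.2 hc)
          rwa [h1, smul_neg, smul_smul, inv_mul_cancel₀ hc.ne', one_smul] at h2
      · rcases smul_eq_zero.1 h.symm with h | h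
        · exact hc.ne' h
        · exact hf0 h
    · rintro g ⟨c, ⟨hc, m, hm, rfl⟩ | ⟨hc, rfl⟩⟩ g' ⟨c', ⟨hc', m', hm', rfl⟩ | ⟨hc', rfl⟩⟩
      · exact ⟨c + c', Or.inl ⟨by positivity, m + m', hadd m hm m' hm', by module⟩⟩
      · exact ⟨c + c', Or.inl ⟨by positivity, m, hm, by module⟩⟩
      · exact ⟨c + c', Or.inl ⟨by positivity, m', hm', by module⟩⟩
      · exact ⟨c + c', Or.inr ⟨by positivity, by module⟩⟩
    · rintro g ⟨c, ⟨hc, m, hm, rfl⟩ | ⟨hc, rfl⟩⟩ d hd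
      · exact ⟨d * c, Or.inl ⟨by positivity, d • m, hsm m hm d hd, by module⟩⟩
      · exact ⟨d * c, Or.inr ⟨by positivity, by module⟩⟩
  have hEq := hmax _ hcoh (fun m hm => ⟨0, Or.inl ⟨le_rfl, m, hm, by simp⟩⟩)
  rw [← hEq]
  exact ⟨1, Or.inr ⟨one_pos, by simp⟩⟩

theorem stmt3 {Ω : Type u} [Nonempty Ω] (x : Setoid Ω) (M M' : Set (Ω → ℝ))
    (hM : MaxCoh M) (hM' : MaxCoh M') :
    eps x M = eps x M' ↔ eps x M ⊆ M' := by
  constructor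
  · intro h
    rw [h]
    exact Set.sInter_subset_of_mem ⟨Or.inl hM'.1, Set.inter_subset_left⟩
  · intro h
    have h1 : M ∩ Meas x ⊆ M' := fun f hf => h (Set.mem_sInter.2 fun D hD => hD.2 hf)
    have h2 : M ∩ Meas x = M' ∩ Meas x := by
      apply Set.Subset.antisymm
      · exact fun f hf => ⟨h1 hf, hf.2⟩
      · rintro f ⟨hf, hx⟩
        refine ⟨?_, hx⟩
        by_contra hfM
        have hf0 : f ≠ 0 := by
          rintro rfl
          exact hM'.1.2.2.1 hf
        have hn := maxcoh_neg_mem hM hx.1 hf0 hfM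
        have hn' : -f ∈ M' := h1 ⟨hn, by
          obtain ⟨B, hB⟩ := hx.1
          exact ⟨B, fun ω => by simpa using hB ω⟩, fun a b hab => by
            simp [hx.2 a b hab]⟩
        have := hM'.1.2.2.2.1 f hf (-f) hn'
        rw [add_neg_cancel] at this
        exact hM'.1.2.2.1 this
    unfold eps
    rw [h2]
end

section
/- Let 𝒫x and 𝒫y be partitions of Ω. Then 𝒫x ≤ 𝒫y (every block of 𝒫y is contained in a block of 𝒫x) if and only if for all maximal coherent sets of gambles M, M' on Ω, ε_y(M) = ε_y(M') implies ε_x(M) = ε_x(M'). In other words, the map 𝒫x ↦ At_x from partitions of Ω to the induced partitions of the set of maximal coherent sets is an order isomorphism onto its image. -/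
open Set

universe u

theorem eps_sub {Ω : Type u} (x : Setoid Ω) {D : Set (Ω → ℝ)} (hD : Coherent D) :
    eps x D ∩ Meas x = D ∩ Meas x := by
  ext f
  constructor
  · rintro ⟨h, hm⟩
    exact ⟨h D ⟨Or.inl hD, inter_subset_left⟩, hm⟩
  · rintro ⟨h, hm⟩
    exact ⟨fun E hE => hE.2 ⟨h, hm⟩, hm⟩

theorem exists_max {Ω : Type u} {D : Set (Ω → ℝ)} (hD : Coherent D) :
    ∃ M, D ⊆ M ∧ MaxCoh M := by
  obtain ⟨M, hDM, hM⟩ := zorn_subset_nonempty {D : Set (Ω → ℝ) | Coherent D} (by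
    intro c hc hch hne
    refine ⟨⋃₀ c, ?_, fun s hs => subset_sUnion_of_mem hs⟩
    obtain ⟨E, hE⟩ := hne
    refine ⟨sUnion_subset fun s hs => (hc hs).1,
      (hc hE).2.1.trans (subset_sUnion_of_mem hE), ?_, ?_, ?_⟩
    · rintro ⟨s, hs, h0⟩
      exact (hc hs).2.2.1 h0
    · rintro f ⟨s, hs, hf⟩ g ⟨t, ht, hg⟩
      rcases hch.total hs ht with h | h
      · exact ⟨t, ht, (hc ht).2.2.2.1 f (h hf) g hg⟩
      · exact ⟨s, hs, (hc hs).2.2.2.1 f hf g (h hg)⟩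
    · rintro f ⟨s, hs, hf⟩ k hk
      exact ⟨s, hs, (hc hs).2.2.2.2 f hf k hk⟩) D hD
  exact ⟨M, hDM, hM.prop, fun E hE hME => (hM.le_of_ge hE hME).antisymm hME⟩

theorem point_coh {Ω : Type u} (a : Ω) :
    Coherent ({f | f ∈ Gmb Ω ∧ 0 < f a} ∪ GmbPos Ω) := by
  have hadd : ∀ f ∈ Gmb Ω, ∀ g ∈ Gmb Ω, f + g ∈ Gmb Ω := by
    rintro f ⟨B, hB⟩ g ⟨C, hC⟩
    exact ⟨B + C, fun ω => (abs_add_le _ _).trans (add_le_add (hB ω) (hC ω))⟩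
  have hsm : ∀ f ∈ Gmb Ω, ∀ c : ℝ, 0 < c → c • f ∈ Gmb Ω := by
    rintro f ⟨B, hB⟩ c hc
    refine ⟨c * B, fun ω => ?_⟩
    simp only [Pi.smul_apply, smul_eq_mul, abs_mul, abs_of_pos hc]
    exact mul_le_mul_of_nonneg_left (hB ω) hc.le
  refine ⟨?_, subset_union_right, ?_, ?_, ?_⟩
  · rintro f (h | h) <;> exact h.1
  · rintro (h | h)
    · exact lt_irrefl _ h.2
    · exact h.2.2 rfl
  · rintro f (hf | hf) g (hg | hg)
    · exact Or.inl ⟨hadd f hf.1 g hg.1, add_pos hf.2 hg.2⟩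
    · exact Or.inl ⟨hadd f hf.1 g hg.1, add_pos_of_pos_of_nonneg hf.2 (hg.2.1 a)⟩
    · exact Or.inl ⟨hadd f hf.1 g hg.1, add_pos_of_nonneg_of_pos (hf.2.1 a) hg.2⟩
    · refine Or.inr ⟨hadd f hf.1 g hg.1, fun ω => add_nonneg (hf.2.1 ω) (hg.2.1 ω), ?_⟩
      intro h
      apply hf.2.2
      funext ω
      have h1 := congrFun h ω
      have h2 := hf.2.1 ω
      have h3 := hg.2.1 ω
      simp only [Pi.add_apply, Pi.zero_apply] at h1 ⊢
      linarith
  · rintro f (hf | hf) c hc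
    · exact Or.inl ⟨hsm f hf.1 c hc, mul_pos hc hf.2⟩
    · exact Or.inr ⟨hsm f hf.1 c hc, fun ω => mul_nonneg hc.le (hf.2.1 ω),
        smul_ne_zero hc.ne' hf.2.2⟩

theorem coh_comp {Ω : Type u} (e : Equiv.Perm Ω) {D : Set (Ω → ℝ)} (hD : Coherent D) :
    Coherent {f : Ω → ℝ | f ∘ e ∈ D} := by
  obtain ⟨h1, h2, h3, h4, h5⟩ := hD
  refine ⟨?_, ?_, h3, fun f hf g hg => h4 _ hf _ hg, fun f hf c hc => h5 _ hf c hc⟩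
  · intro f hf
    obtain ⟨B, hB⟩ := h1 hf
    exact ⟨B, fun ω => by simpa using hB (e.symm ω)⟩
  · rintro f ⟨⟨B, hB⟩, hp, hn⟩
    refine h2 ⟨⟨B, fun ω => hB (e ω)⟩, fun ω => hp (e ω), fun h => hn ?_⟩
    funext ω
    simpa using congrFun h (e.symm ω)

theorem max_comp {Ω : Type u} (e : Equiv.Perm Ω) {M : Set (Ω → ℝ)} (hM : MaxCoh M) :
    MaxCoh {f : Ω → ℝ | f ∘ e ∈ M} := by
  refine ⟨coh_comp e hM.1, fun D hD hMD => ?_⟩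
  have h := hM.2 _ (coh_comp e.symm hD) (fun f hf => hMD (by
    simpa [Function.comp_assoc] using hf))
  ext f
  rw [← h]
  simp [Function.comp_assoc]

theorem stmt5 {Ω : Type u} [Nonempty Ω] (x y : Setoid Ω) :
    ple x y ↔
      ∀ M M' : Set (Ω → ℝ), MaxCoh M → MaxCoh M' →
        eps y M = eps y M' → eps x M = eps x M' := by
  constructor
  · intro h M M' hM hM' he
    have hsub : Meas x ⊆ Meas y := fun f hf => ⟨hf.1, fun a b hab => hf.2 a b (h a b hab)⟩
    have h1 : M ∩ Meas y = M' ∩ Meas y := by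
      rw [← eps_sub y hM.1, ← eps_sub y hM'.1, he]
    have h2 : M ∩ Meas x = M' ∩ Meas x := by
      rw [← inter_eq_right.2 hsub, ← inter_assoc, ← inter_assoc, h1]
    unfold eps
    rw [h2]
  · intro h a b hab
    by_contra hx
    classical
    obtain ⟨N, hN, hmax⟩ := exists_max (point_coh a)
    have hne : a ≠ b := fun e => hx (e ▸ x.iseqv.refl a)
    have hmax' := max_comp (Equiv.swap a b) hmax
    have hy : N ∩ Meas y = {f : Ω → ℝ | f ∘ Equiv.swap a b ∈ N} ∩ Meas y := by
      ext f
      refine and_congr_left fun hf => ?_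
      have : f ∘ Equiv.swap a b = f := by
        funext ω
        have hf' := hf.2 a b hab
        simp only [Function.comp_apply, Equiv.swap_apply_def]
        split_ifs with h1 h2
        · rw [h1, hf']
        · rw [h2, hf']
        · rfl
      simp [this]
    have he := h _ _ hmax hmax' (by unfold eps; rw [hy])
    have hxx := eps_sub x hmax.1
    rw [he, eps_sub x hmax'.1] at hxx
    let f : Ω → ℝ := fun ω => if x.r a ω then 1 else -1
    have hfa : f a = 1 := if_pos (x.iseqv.refl a)
    have hfb : f b = -1 := if_neg hx
    have hfB : ∀ ω, |f ω| ≤ 1 := by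
      intro ω
      simp only [f]
      split_ifs <;> simp
    have hfm : f ∈ Meas x := by
      refine ⟨⟨1, hfB⟩, fun u v huv => ?_⟩
      have : x.r a u ↔ x.r a v :=
        ⟨fun k => x.iseqv.trans k huv, fun k => x.iseqv.trans k (x.iseqv.symm huv)⟩
      simp only [f, this]
    have hfN : f ∈ N := hN (Or.inl ⟨⟨1, hfB⟩, by rw [hfa]; norm_num⟩)
    have hf2 : f ∘ Equiv.swap a b ∈ N := (hxx.ge ⟨hfN, hfm⟩).1
    have hf3 : -(f ∘ Equiv.swap a b) ∈ N := hN (Or.inl ⟨⟨1, fun ω => by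
      simpa using hfB (Equiv.swap a b ω)⟩, by simp [hfb]⟩)
    apply hmax.1.2.2.1
    simpa using hmax.1.2.2.2.1 _ hf2 _ hf3
end

section
/- Let 𝒫x, 𝒫y, 𝒫z be partitions of Ω such that (𝒫x ∨ 𝒫z) ⊥ (𝒫y ∨ 𝒫z) | 𝒫z. Then for every subset S ⊆ Ω: σ_{y∨z}(σ_x(S)) = σ_{y∨z}(σ_z(σ_x(S))). -/
open Set

universe u

theorem stmt11 {Ω : Type u} [Nonempty Ω] (x y z : Setoid Ω)
    (h : CondIndep (pjoin x z) (pjoin y z) z) (S : Set Ω) :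
    sat (pjoin y z) (sat x S) = sat (pjoin y z) (sat z (sat x S)) := by
  ext ω
  constructor
  · rintro ⟨ω1, h1, h2⟩
    exact ⟨ω1, ⟨ω1, h1, z.iseqv.refl ω1⟩, h2⟩
  · rintro ⟨ω1, ⟨ω2, ⟨s, hs, h3⟩, h2⟩, h1⟩
    obtain ⟨w, hw1, hw2, -⟩ := h ω2 ω ω2
      ⟨ω2, (pjoin x z).iseqv.refl ω2, z.iseqv.refl ω2⟩ ⟨ω1, h1, z.iseqv.symm h2⟩
    exact ⟨w, ⟨s, hs, x.iseqv.trans (x.iseqv.symm hw1.1) h3⟩, hw2⟩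
end

section
/- Let 𝒫x be a partition of Ω and S ⊆ Ω nonempty. Then ε_x(D_S) = D_{σ_x(S)}, i.e., C(D_S ∩ L_x) = D_{σ_x(S)}: extraction of the coherent set D_S with respect to 𝒫x corresponds to saturation of S with respect to 𝒫x. -/
open Set

universe u

theorem DS_iff {Ω : Type u} (S : Set Ω) (hS : S.Nonempty) (f : Ω → ℝ) :
    f ∈ DS S ↔ (f ∈ Gmb Ω ∧ ∃ d : ℝ, 0 < d ∧ ∀ ω ∈ S, d ≤ f ω) ∨ f ∈ GmbPos Ω := by
  constructor
  · rintro (⟨⟨B, hB⟩, h⟩ | h)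
    · refine Or.inl ⟨⟨B, hB⟩, _, h, fun ω hω => csInf_le ⟨-B, ?_⟩ ⟨ω, hω, rfl⟩⟩
      rintro _ ⟨a, -, rfl⟩
      exact (abs_le.mp (hB a)).1
    · exact Or.inr h
  · rintro (⟨hf, d, hd, h⟩ | h)
    · refine Or.inl ⟨hf, lt_of_lt_of_le hd (le_csInf (hS.image f) ?_)⟩
      rintro _ ⟨a, ha, rfl⟩
      exact h a ha
    · exact Or.inr h

theorem gmb_add {Ω : Type u} {f g : Ω → ℝ} (hf : f ∈ Gmb Ω) (hg : g ∈ Gmb Ω) :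
    f + g ∈ Gmb Ω := by
  obtain ⟨B, hB⟩ := hf
  obtain ⟨C, hC⟩ := hg
  exact ⟨B + C, fun ω => (abs_add_le _ _).trans (add_le_add (hB ω) (hC ω))⟩

theorem gmb_smul {Ω : Type u} {f : Ω → ℝ} (hf : f ∈ Gmb Ω) (c : ℝ) :
    c • f ∈ Gmb Ω := by
  obtain ⟨B, hB⟩ := hf
  refine ⟨|c| * B, fun ω => ?_⟩
  simp only [Pi.smul_apply, smul_eq_mul, abs_mul]
  exact mul_le_mul_of_nonneg_left (hB ω) (abs_nonneg c)

theorem DS_coherent {Ω : Type u} (S : Set Ω) (hS : S.Nonempty) : Coherent (DS S) := by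
  refine ⟨?_, fun f h => Or.inr h, ?_, ?_, ?_⟩
  · rintro f (h | h)
    · exact h.1
    · exact h.1
  · rw [DS_iff S hS]
    rintro (⟨-, d, hd, h⟩ | h)
    · obtain ⟨s, hs⟩ := hS
      have := h s hs
      simp only [Pi.zero_apply] at this
      linarith
    · exact h.2.2 rfl
  · intro f hf g hg
    rw [DS_iff S hS] at *
    rcases hf with ⟨bf, d, hd, h⟩ | ⟨bf, h, hn⟩ <;> rcases hg with ⟨bg, e, he, k⟩ | ⟨bg, k, kn⟩
    · exact Or.inl ⟨gmb_add bf bg, d + e, by linarith, fun ω hω => add_le_add (h ω hω) (k ω hω)⟩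
    · exact Or.inl ⟨gmb_add bf bg, d, hd, fun ω hω => by
        have := h ω hω; have := k ω; simp only [Pi.add_apply]; linarith⟩
    · exact Or.inl ⟨gmb_add bf bg, e, he, fun ω hω => by
        have := k ω hω; have := h ω; simp only [Pi.add_apply]; linarith⟩
    · refine Or.inr ⟨gmb_add bf bg, fun ω => add_nonneg (h ω) (k ω), fun h0 => hn ?_⟩
      funext ω
      have h1 := congrFun h0 ω
      have := h ω
      have := k ω
      simp only [Pi.add_apply, Pi.zero_apply] at *
      linarith
  · intro f hf c hc
    rw [DS_iff S hS] at *
    rcases hf with ⟨bf, d, hd, h⟩ | ⟨bf, h, hn⟩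
    · exact Or.inl ⟨gmb_smul bf c, c * d, mul_pos hc hd, fun ω hω =>
        mul_le_mul_of_nonneg_left (h ω hω) hc.le⟩
    · exact Or.inr ⟨gmb_smul bf c, fun ω => mul_nonneg hc.le (h ω),
        smul_ne_zero hc.ne' hn⟩

theorem stmt13 {Ω : Type u} [Nonempty Ω] (x : Setoid Ω) (S : Set Ω) (hS : S.Nonempty) :
    eps x (DS S) = DS (sat x S) := by
  classical
  have hT : (sat x S).Nonempty := hS.imp fun s hs => ⟨s, hs, x.iseqv.refl s⟩
  apply Set.Subset.antisymm
  · apply Set.sInter_subset_of_mem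
    refine ⟨Or.inl (DS_coherent _ hT), ?_⟩
    rintro f ⟨hf, hm⟩
    rw [DS_iff _ hS] at hf
    rw [DS_iff _ hT]
    rcases hf with ⟨bf, d, hd, h⟩ | h
    · refine Or.inl ⟨bf, d, hd, ?_⟩
      rintro ω ⟨s, hs, hr⟩
      rw [hm.2 ω s hr]
      exact h s hs
    · exact Or.inr h
  · rintro f hf D ⟨hD, hsub⟩
    rcases hD with hD | rfl
    · rw [DS_iff _ hT] at hf
      rcases hf with ⟨bf, d, hd, h⟩ | h
      · obtain ⟨B, hB⟩ := bf
        let g : Ω → ℝ := fun ω => if ω ∈ sat x S then d / 2 else -(B + 1)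
        have hg : g ∈ Gmb Ω := by
          refine ⟨max |d / 2| |-(B + 1)|, fun ω => ?_⟩
          by_cases hω : ω ∈ sat x S
          · simp only [g, if_pos hω]; exact le_max_left _ _
          · simp only [g, if_neg hω]; exact le_max_right _ _
        have hgD : g ∈ D := by
          apply hsub
          refine ⟨(DS_iff _ hS _).2 (Or.inl ⟨hg, d / 2, by linarith, fun ω hω => ?_⟩), hg, ?_⟩
          · have : ω ∈ sat x S := ⟨ω, hω, x.iseqv.refl ω⟩
            simp only [g, if_pos this]; exact le_refl _
          · intro a b hab
            have : a ∈ sat x S ↔ b ∈ sat x S :=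
              ⟨fun ⟨s, hs, hr⟩ => ⟨s, hs, x.iseqv.trans (x.iseqv.symm hab) hr⟩,
               fun ⟨s, hs, hr⟩ => ⟨s, hs, x.iseqv.trans hab hr⟩⟩
            simp only [g, this]
        have hpos : ∀ ω, 0 < (f + (-1 : ℝ) • g) ω := by
          intro ω
          simp only [Pi.add_apply, Pi.smul_apply, smul_eq_mul]
          by_cases hω : ω ∈ sat x S
          · simp only [g, if_pos hω]; have := h ω hω; linarith
          · simp only [g, if_neg hω]; have := (abs_le.mp (hB ω)).1; linarith
        have hk : f + (-1 : ℝ) • g ∈ D := by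
          apply hD.2.1
          refine ⟨gmb_add ⟨B, hB⟩ (gmb_smul hg _), fun ω => (hpos ω).le, fun h0 => ?_⟩
          obtain ⟨s, -⟩ := hS
          have := hpos s
          rw [h0] at this
          exact lt_irrefl _ this
        have := hD.2.2.2.1 _ hk _ hgD
        have e : f + (-1 : ℝ) • g + g = f := by
          funext ω; simp
        rwa [e] at this
      · exact hD.2.1 h
    · exact (DS_coherent _ hT).1 hf
end

section
/- Let M be a maximal coherent set of gambles on Ω and D ∈ Φ(Ω). Then either D ⊆ M, in which case C(M ∪ D) = M, or C(M ∪ D) = L(Ω); that is, combination of an atom M with any element D of Φ(Ω) yields either M itself or the null element L(Ω). In particular, for two maximal coherent sets M1, M2, either M1 = M2 or C(M1 ∪ M2) = L(Ω). -/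
open Set

universe u

theorem Cl_aux {Ω : Type u} (M D : Set (Ω → ℝ))
    (hM : MaxCoh M) (hD : PhiMem D) :
    (D ⊆ M → Cl (M ∪ D) = M) ∧ (¬D ⊆ M → Cl (M ∪ D) = Gmb Ω) := by
  constructor
  · intro h
    apply Subset.antisymm
    · exact sInter_subset_of_mem ⟨Or.inl hM.1, union_subset Subset.rfl h⟩
    · exact subset_sInter fun E hE => subset_union_left.trans hE.2
  · intro h
    have hDG : D ⊆ Gmb Ω := by
      rcases hD with hD | rfl
      · exact hD.1
      · exact Subset.rfl
    apply Subset.antisymm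
    · exact sInter_subset_of_mem ⟨Or.inr rfl, union_subset hM.1.1 hDG⟩
    · refine subset_sInter fun E hE => ?_
      rcases hE.1 with hc | rfl
      · have := hM.2 E hc (subset_union_left.trans hE.2)
        exact absurd (this ▸ subset_union_right.trans hE.2) h
      · exact Subset.rfl

theorem stmt19 {Ω : Type u} [Nonempty Ω] (M D : Set (Ω → ℝ))
    (hM : MaxCoh M) (hD : PhiMem D) :
    ((D ⊆ M → Cl (M ∪ D) = M) ∧ (¬D ⊆ M → Cl (M ∪ D) = Gmb Ω)) ∧
    ∀ M1 M2 : Set (Ω → ℝ), MaxCoh M1 → MaxCoh M2 → M1 = M2 ∨ Cl (M1 ∪ M2) = Gmb Ω := by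
  refine ⟨Cl_aux M D hM hD, fun M1 M2 h1 h2 => ?_⟩
  by_cases h : M2 ⊆ M1
  · exact Or.inl (h2.2 M1 h1.1 h)
  · exact Or.inr ((Cl_aux M1 M2 h1 (Or.inl h2.1)).2 h)
end
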